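/- arXiv:2201.03854 — 4 statements merged into one kernel-verified Lean document; each statement's English description precedes it below -/
import Mathlib

section
/- For real constants α, β, a, b, r with αb − aβ ≠ 0, the bracket of the family 𝔤₅(α, a, β, b, r) satisfies the Jacobi identity [E,[F,G]] + [F,[G,E]] + [G,[E,F]] = 0 for all E, F, G ∈ 𝔤, so 𝔤₅(α, a, β, b, r) is a Lie algebra. -/
noncomputable section

/-- The bilinear antisymmetric bracket on ℝ⁴ determined by the structure constants. -/
def bk (α a β b r : ℝ) (E F : Fin 4 → ℝ) : Fin 4 → ℝ :=
  (E 0 * F 1 - E 1 * F 0) • (![-r, 0, -(a * r ^ 2 / (2 * (α * b - a * β))), α * r ^ 2 / (2 * (α * b - a * β))] : Fin 4 → ℝ) +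
  (E 0 * F 2 - E 2 * F 0) • (![-α, -β, r * (β * b - α * a) / (2 * (α * b - a * β)), r * (α ^ 2 - β ^ 2) / (2 * (α * b - a * β))] : Fin 4 → ℝ) +
  (E 0 * F 3 - E 3 * F 0) • (![-a, -b, r * (b ^ 2 - a ^ 2) / (2 * (α * b - a * β)), r * (α * a - β * b) / (2 * (α * b - a * β))] : Fin 4 → ℝ) +
  (E 1 * F 2 - E 2 * F 1) • (![β, -α, r * (α * b + β * a) / (2 * (α * b - a * β)), -(r * α * β / (α * b - a * β))] : Fin 4 → ℝ) +
  (E 1 * F 3 - E 3 * F 1) • (![b, -a, r * a * b / (α * b - a * β), -(r * (α * b + β * a) / (2 * (α * b - a * β)))] : Fin 4 → ℝ) +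
  (E 2 * F 3 - E 3 * F 2) • (![0, 0, 0, 0] : Fin 4 → ℝ)

/-! The algebra is the real Lie algebra `ℂ ⋊ ℂ` of infinitesimal affine maps `t ↦ μ t + u` of the
complex line, in disguise. For `r = 0` it suffices to read `X, Y` as the translations `1, i` and
`Z, W` as the dilations `α + i β, a + i b`; in general one also lets the translation by `u` carry
the dilation `(r / 2) i ū`. When `α b - a β ≠ 0` the numbers `α + i β, a + i b` are independent over
`ℝ`, so this is a faithful representation by `2 × 2` complex matrices, and the Jacobi identity is
inherited from the commutator. -/

theorem jacobi_of_injective {V L F : Type*} [AddZeroClass V] [LieRing L] [FunLike F V L]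
    [AddMonoidHomClass F V L] {f : F} (hf : Function.Injective f) {br : V → V → V}
    (hbr : ∀ x y, f (br x y) = ⁅f x, f y⁆) (x y z : V) :
    br x (br y z) + br y (br z x) + br z (br x y) = 0 :=
  hf <| by simp only [map_add, map_zero, hbr, lie_jacobi]

/-- The infinitesimal affine map `t ↦ μ t + u` of the line over `R`, encoded by the pair `(μ, u)`,
as a matrix acting on the column `(t, 1)`. -/
def affineMatrix (R : Type*) [Semiring R] : R × R →ₗ[R] Matrix (Fin 2) (Fin 2) R where
  toFun p := !![p.1, p.2; 0, 0]
  map_add' _ _ := by simp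
  map_smul' _ _ := by simp

theorem affineMatrix_injective (R : Type*) [Semiring R] :
    Function.Injective (affineMatrix R) := fun _ _ h =>
  Prod.ext (congrFun₂ h 0 0) (congrFun₂ h 0 1)

theorem lie_affineMatrix {R : Type*} [Ring R] (p q : R × R) :
    ⁅affineMatrix R p, affineMatrix R q⁆ =
      affineMatrix R (⁅p.1, q.1⁆, p.1 * q.2 - q.1 * p.2) := by
  ext i j
  fin_cases i <;> fin_cases j <;> simp [affineMatrix, Ring.lie_def]

attribute [local instance] LieRing.ofAssociativeRing

namespace bk

variable (α a β b r : ℝ)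

/-- The translation part `u = x + i y` of `x X + y Y + z Z + w W`. -/
def translation : (Fin 4 → ℝ) →ₗ[ℝ] ℂ where
  toFun E := ⟨E 0, E 1⟩
  map_add' _ _ := rfl
  map_smul' _ _ := by apply Complex.ext <;> simp

theorem translation_re (E : Fin 4 → ℝ) : (translation E).re = E 0 := rfl

theorem translation_im (E : Fin 4 → ℝ) : (translation E).im = E 1 := rfl

/-- The dilation part `z (α + i β) + w (a + i b) + (r / 2) i ū` of `x X + y Y + z Z + w W`, where
`u = x + i y` is its translation part. -/
def dilation : (Fin 4 → ℝ) →ₗ[ℝ] ℂ :=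
  (LinearMap.proj 2).smulRight (⟨α, β⟩ : ℂ) + (LinearMap.proj 3).smulRight (⟨a, b⟩ : ℂ) +
    LinearMap.mulLeft ℝ (⟨0, r / 2⟩ : ℂ) ∘ₗ Complex.conjAe.toLinearMap ∘ₗ translation

theorem dilation_re (E : Fin 4 → ℝ) :
    (dilation α a β b r E).re = E 2 * α + E 3 * a + r / 2 * E 1 := by
  simp [dilation, translation_re, translation_im]

theorem dilation_im (E : Fin 4 → ℝ) :
    (dilation α a β b r E).im = E 2 * β + E 3 * b + r / 2 * E 0 := by
  simp [dilation, translation_re, translation_im]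

/-- The vector with translation part `u` and dilation part `0`, the `Z, W` coordinates being found
by Cramer's rule; a junk value if `α b - a β = 0`. -/
def pureTranslation (u : ℂ) : Fin 4 → ℝ :=
  ![u.re, u.im, r / 2 * (a * u.re - b * u.im) / (α * b - a * β),
    r / 2 * (β * u.im - α * u.re) / (α * b - a * β)]

theorem translation_pureTranslation (u : ℂ) :
    translation (pureTranslation α a β b r u) = u := rfl

variable {α a β b} in
theorem dilation_pureTranslation (hd : α * b - a * β ≠ 0) (u : ℂ) :
    dilation α a β b r (pureTranslation α a β b r u) = 0 := by
  have hinv := mul_inv_cancel₀ hd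
  apply Complex.ext <;>
    simp only [dilation_re, dilation_im, pureTranslation, Complex.zero_re, Complex.zero_im,
      Matrix.cons_val]
  · linear_combination (-(r / 2) * u.im) * hinv
  · linear_combination (-(r / 2) * u.re) * hinv

theorem eq_pureTranslation (E F : Fin 4 → ℝ) :
    bk α a β b r E F = pureTranslation α a β b r
      (dilation α a β b r E * translation F - dilation α a β b r F * translation E) := by
  ext i
  fin_cases i <;>
    simp only [bk, pureTranslation, translation_re, translation_im, dilation_re, dilation_im,
      Complex.sub_re, Complex.sub_im, Complex.mul_re, Complex.mul_im, Pi.add_apply, Pi.smul_apply,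
      smul_eq_mul, Fin.zero_eta, Fin.mk_one, Fin.reduceFinMk, Matrix.cons_val, div_eq_mul_inv,
      mul_inv] <;>
    ring

/-- The representation of the algebra by infinitesimal affine maps of the complex line. -/
def toAffineMatrix : (Fin 4 → ℝ) →ₗ[ℝ] Matrix (Fin 2) (Fin 2) ℂ :=
  (affineMatrix ℂ).restrictScalars ℝ ∘ₗ (dilation α a β b r).prod translation

variable {α a β b}

theorem toAffineMatrix_bk (hd : α * b - a * β ≠ 0) (E F : Fin 4 → ℝ) :
    toAffineMatrix α a β b r (bk α a β b r E F) =
      ⁅toAffineMatrix α a β b r E, toAffineMatrix α a β b r F⁆ := by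
  have hcomm : ⁅dilation α a β b r E, dilation α a β b r F⁆ = 0 := (Commute.all _ _).lie_eq
  simp [toAffineMatrix, lie_affineMatrix, hcomm, eq_pureTranslation,
    dilation_pureTranslation r hd, translation_pureTranslation]

theorem dilation_prod_translation_injective (hd : α * b - a * β ≠ 0) :
    Function.Injective ((dilation α a β b r).prod translation) := by
  rw [injective_iff_map_eq_zero]
  intro E hE
  obtain ⟨hdil, htr⟩ := Prod.mk.inj hE
  have h0 : E 0 = 0 := congrArg Complex.re htr
  have h1 : E 1 = 0 := congrArg Complex.im htr
  have hre : E 2 * α + E 3 * a = 0 := by simpa [dilation_re, h1] using congrArg Complex.re hdil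
  have him : E 2 * β + E 3 * b = 0 := by simpa [dilation_im, h0] using congrArg Complex.im hdil
  have h2 : E 2 = 0 := mul_left_cancel₀ hd (by linear_combination b * hre - a * him)
  have h3 : E 3 = 0 := mul_left_cancel₀ hd (by linear_combination α * him - β * hre)
  ext i
  fin_cases i <;> assumption

theorem toAffineMatrix_injective (hd : α * b - a * β ≠ 0) :
    Function.Injective (toAffineMatrix α a β b r) :=
  (affineMatrix_injective ℂ).comp (dilation_prod_translation_injective r hd)

end bk

theorem g5_jacobi (α a β b r : ℝ) (hd : α * b - a * β ≠ 0) :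
    ∀ E F G : Fin 4 → ℝ,
      bk α a β b r E (bk α a β b r F G) + bk α a β b r F (bk α a β b r G E) +
        bk α a β b r G (bk α a β b r E F) = 0 :=
  jacobi_of_injective (bk.toAffineMatrix_injective r hd) (bk.toAffineMatrix_bk r hd)

end
end

section
/- For the family 𝔤₅(α, a, β, b, r) with αb − aβ ≠ 0 and r ≠ 0, the structure J is almost Kähler, i.e. dω(E,F,G) = 0 for all E, F, G ∈ 𝔤, if and only if r² = 4(αb − aβ). -/
noncomputable section

/-- The almost Hermitian structure J with J(X)=Y, J(Y)=-X, J(Z)=W, J(W)=-Z. -/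
def Jm (E : Fin 4 → ℝ) : Fin 4 → ℝ := ![-E 1, E 0, -E 3, E 2]

/-- The standard inner product, making {X,Y,Z,W} orthonormal. -/
def ip (E F : Fin 4 → ℝ) : ℝ := E 0 * F 0 + E 1 * F 1 + E 2 * F 2 + E 3 * F 3

/-- The Kähler form ω(E,F) = ⟨JE, F⟩. -/
def om (E F : Fin 4 → ℝ) : ℝ := ip (Jm E) F

/-- The left-invariant exterior derivative of the Kähler form. -/
def dom (α a β b r : ℝ) (E F G : Fin 4 → ℝ) : ℝ :=
  -om (bk α a β b r E F) G - om (bk α a β b r F G) E - om (bk α a β b r G E) F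

/-!
Write `θ = α Z* + a W*`, so that `θ V` is half the trace of `ad V` on `⟨X, Y⟩` for `V ∈ ⟨Z, W⟩`.
The Kähler form is the sum of the area forms `X* ∧ Y*` and `Z* ∧ W*`. Since `ad V` acts on `⟨X, Y⟩`,
modulo `⟨Z, W⟩`, as `θ V` times the identity plus a rotation, `d(X* ∧ Y*) = -2 X* ∧ Y* ∧ θ`. Since
`ad X` and `ad Y` act on `⟨Z, W⟩`, modulo `⟨X, Y⟩`, without trace, only the component of `[X, Y]` in
`⟨Z, W⟩` contributes to `d(Z* ∧ W*)`, which is `(r² / 2(αb - aβ)) X* ∧ Y* ∧ θ`. Hence `dω` is a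
multiple of `X* ∧ Y* ∧ θ`, and this form is nonzero because `αb - aβ ≠ 0` forces `(α, a) ≠ 0`.
-/

open LinearMap (proj)

section ExteriorAlgebra

variable {R V : Type*} [CommRing R] [AddCommGroup V] [Module R V]

/-- The exterior product of a family of covectors, as the alternating form
`v ↦ det (φ j (v i))`, with no normalising factorial. -/
def covectorWedge {ι : Type*} [Fintype ι] [DecidableEq ι] (φ : ι → Module.Dual R V) :
    V [⋀^ι]→ₗ[R] R :=
  Matrix.detRowAlternating.compLinearMap (LinearMap.pi φ)

theorem covectorWedge_apply {ι : Type*} [Fintype ι] [DecidableEq ι] (φ : ι → Module.Dual R V)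
    (v : ι → V) : covectorWedge φ v = (Matrix.of fun i j => φ j (v i)).det :=
  rfl

theorem covectorWedge_pair (φ ψ : Module.Dual R V) (E F : V) :
    covectorWedge ![φ, ψ] ![E, F] = φ E * ψ F - ψ E * φ F := by
  simp [covectorWedge_apply, Matrix.det_fin_two]

theorem covectorWedge_triple (φ ψ χ : Module.Dual R V) (E F G : V) :
    covectorWedge ![φ, ψ, χ] ![E, F, G] =
      φ E * (ψ F * χ G - χ F * ψ G) - ψ E * (φ F * χ G - χ F * φ G)
        + χ E * (φ F * ψ G - ψ F * φ G) := by
  simp only [covectorWedge_apply, Matrix.det_fin_three, Matrix.of_apply, Matrix.cons_val]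
  ring

theorem forall_alternatingMap_triple_eq_zero_iff {N : Type*} [AddCommMonoid N] [Module R N]
    (f : V [⋀^Fin 3]→ₗ[R] N) :
    (∀ E F G, f ![E, F, G] = 0) ↔ f = 0 := by
  simp only [AlternatingMap.ext_iff, Fin.forall_fin_succ_pi, Fin.forall_fin_zero_pi,
    AlternatingMap.zero_apply]
  rfl

/-- The exterior derivative of a left-invariant 2-form `η` with respect to a bracket `B`, which is
taken as an unbundled operation. -/
def invariantExtDeriv (B : V → V → V) (η : V [⋀^Fin 2]→ₗ[R] R) (E F G : V) : R :=
  -η ![B E F, G] - η ![B F G, E] - η ![B G E, F]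

theorem invariantExtDeriv_add (B : V → V → V) (η₁ η₂ : V [⋀^Fin 2]→ₗ[R] R) (E F G : V) :
    invariantExtDeriv B (η₁ + η₂) E F G =
      invariantExtDeriv B η₁ E F G + invariantExtDeriv B η₂ E F G := by
  simp only [invariantExtDeriv, AlternatingMap.add_apply]
  ring

end ExteriorAlgebra

/-- The 1-form `θ = α Z* + a W*`, which records the dilation rate of `⟨X, Y⟩` under `ad Z` and
`ad W`. -/
def dilationForm (α a : ℝ) : Module.Dual ℝ (Fin 4 → ℝ) :=
  α • proj 2 + a • proj 3

theorem dilationForm_apply (α a : ℝ) (E : Fin 4 → ℝ) :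
    dilationForm α a E = α * E 2 + a * E 3 :=
  rfl

theorem covectorWedge_dilationForm_eq_zero_iff (α a : ℝ) :
    covectorWedge ![proj 0, proj 1, dilationForm α a] = 0 ↔ α = 0 ∧ a = 0 := by
  rw [← forall_alternatingMap_triple_eq_zero_iff]
  constructor
  · intro h
    have hα : α = 0 := by
      simpa [covectorWedge_triple, dilationForm_apply] using
        h ![1, 0, 0, 0] ![0, 1, 0, 0] ![0, 0, 1, 0]
    have ha : a = 0 := by
      simpa [covectorWedge_triple, dilationForm_apply] using
        h ![1, 0, 0, 0] ![0, 1, 0, 0] ![0, 0, 0, 1]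
    exact ⟨hα, ha⟩
  · rintro ⟨rfl, rfl⟩ E F G
    simp [covectorWedge_triple, dilationForm_apply]

/-- The area form `X* ∧ Y*` of the distribution `⟨X, Y⟩`. -/
def horizontalArea : (Fin 4 → ℝ) [⋀^Fin 2]→ₗ[ℝ] ℝ :=
  covectorWedge ![proj 0, proj 1]

theorem horizontalArea_apply (E F : Fin 4 → ℝ) :
    horizontalArea ![E, F] = E 0 * F 1 - E 1 * F 0 :=
  covectorWedge_pair _ _ E F

/-- The area form `Z* ∧ W*` of the distribution `⟨Z, W⟩`. -/
def verticalArea : (Fin 4 → ℝ) [⋀^Fin 2]→ₗ[ℝ] ℝ :=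
  covectorWedge ![proj 2, proj 3]

theorem verticalArea_apply (E F : Fin 4 → ℝ) :
    verticalArea ![E, F] = E 2 * F 3 - E 3 * F 2 :=
  covectorWedge_pair _ _ E F

theorem om_eq_horizontalArea_add_verticalArea (E F : Fin 4 → ℝ) :
    om E F = (horizontalArea + verticalArea) ![E, F] := by
  simp only [om, ip, Jm, AlternatingMap.add_apply, horizontalArea_apply, verticalArea_apply,
    Matrix.cons_val]
  ring

section Family

variable (α a β b r : ℝ) (E F G : Fin 4 → ℝ)

theorem dom_eq_invariantExtDeriv :
    dom α a β b r E F G =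
      invariantExtDeriv (bk α a β b r) (horizontalArea + verticalArea) E F G := by
  simp only [dom, om_eq_horizontalArea_add_verticalArea, invariantExtDeriv]

theorem invariantExtDeriv_horizontalArea :
    invariantExtDeriv (bk α a β b r) horizontalArea E F G =
      -2 * covectorWedge ![proj 0, proj 1, dilationForm α a] ![E, F, G] := by
  simp only [invariantExtDeriv, horizontalArea_apply, covectorWedge_triple, dilationForm_apply,
    LinearMap.proj_apply, bk, Pi.add_apply, Pi.smul_apply, smul_eq_mul, Matrix.cons_val]
  ring

theorem invariantExtDeriv_verticalArea :
    invariantExtDeriv (bk α a β b r) verticalArea E F G =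
      r ^ 2 / (2 * (α * b - a * β)) *
        covectorWedge ![proj 0, proj 1, dilationForm α a] ![E, F, G] := by
  simp only [invariantExtDeriv, verticalArea_apply, covectorWedge_triple, dilationForm_apply,
    LinearMap.proj_apply, bk, Pi.add_apply, Pi.smul_apply, smul_eq_mul, Matrix.cons_val]
  ring

theorem dom_eq_smul_covectorWedge :
    dom α a β b r E F G = ((r ^ 2 / (2 * (α * b - a * β)) - 2) •
      covectorWedge ![proj 0, proj 1, dilationForm α a]) ![E, F, G] := by
  rw [dom_eq_invariantExtDeriv, invariantExtDeriv_add, invariantExtDeriv_horizontalArea,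
    invariantExtDeriv_verticalArea, AlternatingMap.smul_apply, smul_eq_mul]
  ring

end Family

theorem g5_almostKaehler_iff (α a β b r : ℝ) (hd : α * b - a * β ≠ 0) (hr : r ≠ 0) :
    (∀ E F G : Fin 4 → ℝ, dom α a β b r E F G = 0) ↔
    r ^ 2 = 4 * (α * b - a * β) := by
  have hwedge : covectorWedge ![proj 0, proj 1, dilationForm α a] ≠ 0 := by
    rw [Ne, covectorWedge_dilationForm_eq_zero_iff]
    rintro ⟨rfl, rfl⟩
    simp at hd
  calc (∀ E F G : Fin 4 → ℝ, dom α a β b r E F G = 0)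
    _ ↔ (r ^ 2 / (2 * (α * b - a * β)) - 2) •
          covectorWedge ![proj 0, proj 1, dilationForm α a] = 0 := by
      simp only [dom_eq_smul_covectorWedge, forall_alternatingMap_triple_eq_zero_iff]
    _ ↔ r ^ 2 / (2 * (α * b - a * β)) - 2 = 0 := smul_eq_zero_iff_left hwedge
    _ ↔ r ^ 2 = 4 * (α * b - a * β) := by
      rw [sub_eq_zero, div_eq_iff (mul_ne_zero two_ne_zero hd), ← mul_assoc]
      norm_num

end
end

section
/- For the family 𝔤₅(α, a, β, b, r) with αb − aβ ≠ 0 and r ≠ 0, the structure J is integrable, i.e. the Nijenhuis tensor N(E,F) = 0 for all E, F ∈ 𝔤, if and only if a = β and b = −α. -/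
noncomputable section

/-- The Nijenhuis tensor of J. -/
def NT (α a β b r : ℝ) (E F : Fin 4 → ℝ) : Fin 4 → ℝ :=
  bk α a β b r E F + Jm (bk α a β b r (Jm E) F) + Jm (bk α a β b r E (Jm F)) -
    bk α a β b r (Jm E) (Jm F)

/-!
The Nijenhuis tensor is conjugate-linear with respect to `J` in both arguments and alternating, so
on a space spanned over `ℝ[J]` by two vectors `X`, `Z` it vanishes as soon as `N(X, Z) = 0`.
For `𝔤₅` put `u = α + b` and `v = β - a`. With `W = J Z` playing the role of `i Z`, one finds
`N(X, Z) = (i r / (2 (α b - a β))) (u - i v)² Z`, so integrability means `u = v = 0`.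
-/

section Nijenhuis

variable {R M : Type*} [CommRing R] [AddCommGroup M] [Module R M]
  (B : M →ₗ[R] M →ₗ[R] M) (J : Module.End R M)

/-- The Nijenhuis tensor of an endomorphism `J` with respect to a bilinear bracket `B`, as a
bilinear map. The sign convention is the one for `J² = -1`: the term `J² (B x y)` of the general
formula is replaced by `-B x y`, and the overall sign is reversed. -/
def nijenhuis : M →ₗ[R] M →ₗ[R] M :=
  B + (B.comp J).compr₂ J + (B.compl₂ J).compr₂ J - B.compl₁₂ J J

lemma nijenhuis_apply (x y : M) :
    nijenhuis B J x y = B x y + J (B (J x) y) + J (B x (J y)) - B (J x) (J y) :=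
  rfl

variable {B J}

lemma nijenhuis_isAlt (hB : B.IsAlt) : (nijenhuis B J).IsAlt := fun x ↦ by
  rw [nijenhuis_apply, hB, hB, ← hB.neg x (J x), map_neg]
  abel

lemma nijenhuis_map_left (hJ : ∀ x, J (J x) = -x) (x y : M) :
    nijenhuis B J (J x) y = -J (nijenhuis B J x y) := by
  simp only [nijenhuis_apply, hJ, map_add, map_sub, map_neg, LinearMap.neg_apply]
  abel

lemma nijenhuis_map_right (hJ : ∀ x, J (J x) = -x) (x y : M) :
    nijenhuis B J x (J y) = -J (nijenhuis B J x y) := by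
  simp only [nijenhuis_apply, hJ, map_add, map_sub, map_neg]
  abel

lemma nijenhuis_eq_zero_iff_of_span_union_image (hJ : ∀ x, J (J x) = -x) {s : Set M}
    (hs : Submodule.span R (s ∪ J '' s) = ⊤) :
    nijenhuis B J = 0 ↔ ∀ x ∈ s, ∀ y ∈ s, nijenhuis B J x y = 0 := by
  refine ⟨fun h x _ y _ ↦ by simp [h], fun h ↦ ?_⟩
  have right_zero (x : M) (hx : x ∈ s) : nijenhuis B J x = 0 := by
    refine LinearMap.ext_on hs ?_
    rintro _ (hy | ⟨y, hy, rfl⟩)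
    · exact h x hx _ hy
    · simp [nijenhuis_map_right hJ, h x hx y hy]
  refine LinearMap.ext_on hs ?_
  rintro _ (hx | ⟨x, hx, rfl⟩)
  · exact right_zero _ hx
  · ext y
    simp [nijenhuis_map_left hJ, right_zero x hx]

lemma nijenhuis_eq_zero_iff_of_span_pair (hB : B.IsAlt) (hJ : ∀ x, J (J x) = -x) {x y : M}
    (hxy : Submodule.span R ({x, y} ∪ J '' {x, y}) = ⊤) :
    nijenhuis B J = 0 ↔ nijenhuis B J x y = 0 := by
  rw [nijenhuis_eq_zero_iff_of_span_union_image hJ hxy]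
  have hN : (nijenhuis B J).IsAlt := nijenhuis_isAlt hB
  simp [hN x, hN y, ← hN.neg x y]

end Nijenhuis

lemma mul_eq_zero_and_sq_eq_sq_iff {R : Type*} [CommMonoidWithZero R] [IsReduced R] {u v : R} :
    u * v = 0 ∧ u ^ 2 = v ^ 2 ↔ u = 0 ∧ v = 0 := by
  refine ⟨fun ⟨huv, hsq⟩ ↦ ?_, by rintro ⟨rfl, rfl⟩; simp⟩
  have hu : u = 0 := by
    refine eq_zero_of_pow_eq_zero (n := 3) ?_
    rw [pow_succ', hsq, pow_two, ← mul_assoc, huv, zero_mul]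
  exact ⟨hu, eq_zero_of_pow_eq_zero (n := 2) (by simp [← hsq, hu])⟩

section G5

variable (α a β b r : ℝ)

/-- The bracket `bk` of `𝔤₅(α, a, β, b, r)` as a bundled bilinear map. -/
def g5Bracket : (Fin 4 → ℝ) →ₗ[ℝ] (Fin 4 → ℝ) →ₗ[ℝ] (Fin 4 → ℝ) :=
  LinearMap.mk₂ ℝ (bk α a β b r)
    (fun _ _ _ ↦ by ext; simp only [bk, Pi.add_apply, Pi.smul_apply, smul_eq_mul]; ring)
    (fun _ _ _ ↦ by ext; simp only [bk, Pi.add_apply, Pi.smul_apply, smul_eq_mul]; ring)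
    (fun _ _ _ ↦ by ext; simp only [bk, Pi.add_apply, Pi.smul_apply, smul_eq_mul]; ring)
    (fun _ _ _ ↦ by ext; simp only [bk, Pi.add_apply, Pi.smul_apply, smul_eq_mul]; ring)

lemma g5Bracket_isAlt : (g5Bracket α a β b r).IsAlt := fun E ↦ by
  simp [g5Bracket, bk, mul_comm]

/-- The almost complex structure `Jm` as a bundled linear map. -/
def JmEnd : Module.End ℝ (Fin 4 → ℝ) where
  toFun := Jm
  map_add' E F := by ext i; fin_cases i <;> simp [Jm, add_comm]
  map_smul' c E := by ext i; fin_cases i <;> simp [Jm]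

lemma JmEnd_JmEnd (E : Fin 4 → ℝ) : JmEnd (JmEnd E) = -E := by
  ext i
  fin_cases i <;> simp [JmEnd, Jm]

lemma JmEnd_single_zero : JmEnd (Pi.single 0 1) = Pi.single 1 1 := by
  ext i
  fin_cases i <;> simp [JmEnd, Jm]

lemma JmEnd_single_two : JmEnd (Pi.single 2 1) = Pi.single 3 1 := by
  ext i
  fin_cases i <;> simp [JmEnd, Jm]

lemma span_single_zero_single_two_union_image_JmEnd :
    Submodule.span ℝ ({Pi.single 0 1, Pi.single 2 1} ∪
      JmEnd '' {Pi.single 0 1, Pi.single 2 1}) = ⊤ := by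
  rw [Set.image_pair, JmEnd_single_zero, JmEnd_single_two, eq_top_iff,
    ← (Pi.basisFun ℝ (Fin 4)).span_eq]
  refine Submodule.span_mono (Set.range_subset_iff.2 fun i ↦ ?_)
  fin_cases i <;> simp

lemma nijenhuis_g5Bracket_JmEnd_apply (E F : Fin 4 → ℝ) :
    nijenhuis (g5Bracket α a β b r) JmEnd E F = NT α a β b r E F :=
  rfl

lemma forall_NT_eq_zero_iff_single_zero_single_two :
    (∀ E F, NT α a β b r E F = 0) ↔ NT α a β b r (Pi.single 0 1) (Pi.single 2 1) = 0 := by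
  simpa only [LinearMap.ext_iff₂, nijenhuis_g5Bracket_JmEnd_apply, LinearMap.zero_apply] using
    nijenhuis_eq_zero_iff_of_span_pair (g5Bracket_isAlt α a β b r) JmEnd_JmEnd
      span_single_zero_single_two_union_image_JmEnd

lemma NT_single_zero_single_two :
    NT α a β b r (Pi.single 0 1) (Pi.single 2 1) =
      (r / (2 * (α * b - a * β))) •
        ![0, 0, 2 * ((α + b) * (β - a)), (α + b) ^ 2 - (β - a) ^ 2] := by
  ext i
  fin_cases i <;> simp [NT, bk, Jm, div_eq_mul_inv] <;> ring

end G5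

theorem g5_integrable_iff (α a β b r : ℝ) (hd : α * b - a * β ≠ 0) (hr : r ≠ 0) :
    (∀ E F : Fin 4 → ℝ, NT α a β b r E F = 0) ↔ (a = β ∧ b = -α) := by
  have hc : r / (2 * (α * b - a * β)) ≠ 0 := div_ne_zero hr (mul_ne_zero two_ne_zero hd)
  calc (∀ E F : Fin 4 → ℝ, NT α a β b r E F = 0)
      ↔ NT α a β b r (Pi.single 0 1) (Pi.single 2 1) = 0 :=
        forall_NT_eq_zero_iff_single_zero_single_two α a β b r
    _ ↔ (α + b) * (β - a) = 0 ∧ (α + b) ^ 2 = (β - a) ^ 2 := by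
      rw [NT_single_zero_single_two, smul_eq_zero_iff_right hc]
      simp [sub_eq_zero]
    _ ↔ α + b = 0 ∧ β - a = 0 := mul_eq_zero_and_sq_eq_sq_iff
    _ ↔ a = β ∧ b = -α := by
      rw [and_comm, sub_eq_zero, eq_comm, add_comm, add_eq_zero_iff_eq_neg]

end
end

section
/- For the family 𝔤₅(α, a, β, b, r) with αb − aβ ≠ 0 and r ≠ 0, the structure J is never Kähler: it is impossible that simultaneously dω(E,F,G) = 0 for all E, F, G ∈ 𝔤 and N(E,F) = 0 for all E, F ∈ 𝔤. -/
noncomputable section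

/-!
The 3-form `dω` equals `θ ∧ ω`, where the Lee form `θ` is a multiple of `α Z* + a W*` that vanishes
exactly when `r² = 4(αb - aβ)`. The Nijenhuis tensor is skew and `J`-antilinear in each argument,
hence determined by `N(X, Z)`. With `W = JZ = iZ`, this vector is
`(r / (2(αb - aβ))) i ((α + b) - (β - a) i)² Z`, so for `r ≠ 0` it vanishes only if `b = -α` and
`β = a`. But then `αb - aβ = -(α² + a²)` is negative, whereas `dω = 0` makes it positive.
-/

theorem mul_eq_zero_and_sq_eq_sq_iff_s14 {M : Type*} [MonoidWithZero M] [NoZeroDivisors M] {p q : M} :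
    p * q = 0 ∧ p ^ 2 = q ^ 2 ↔ p = 0 ∧ q = 0 := by
  refine ⟨?_, by rintro ⟨rfl, rfl⟩; simp⟩
  rintro ⟨hpq, hsq⟩
  rcases mul_eq_zero.1 hpq with rfl | rfl
  · simpa using hsq.symm
  · simpa using hsq

/-- The Lee form of the almost Hermitian structure: the 1-form `θ` with `dω = θ ∧ ω`. -/
def leeForm (α a β b r : ℝ) : (Fin 4 → ℝ) →ₗ[ℝ] ℝ :=
  (r ^ 2 / (2 * (α * b - a * β)) - 2) • (α • LinearMap.proj 2 + a • LinearMap.proj 3)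

section

variable {α a β b r : ℝ}

theorem leeForm_apply (E : Fin 4 → ℝ) :
    leeForm α a β b r E = (r ^ 2 / (2 * (α * b - a * β)) - 2) * (α * E 2 + a * E 3) :=
  rfl

theorem leeForm_eq_zero_iff (hd : α * b - a * β ≠ 0) :
    leeForm α a β b r = 0 ↔ r ^ 2 = 4 * (α * b - a * β) := by
  have coeff_eq_zero_iff :
      r ^ 2 / (2 * (α * b - a * β)) - 2 = 0 ↔ r ^ 2 = 4 * (α * b - a * β) := by
    rw [sub_eq_zero, div_eq_iff (mul_ne_zero two_ne_zero hd), ← mul_assoc]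
    norm_num
  rw [← coeff_eq_zero_iff]
  refine ⟨fun hθ => ?_, fun hc => by rw [leeForm, hc, zero_smul]⟩
  by_contra hc
  have hα : α = 0 := by
    simpa [leeForm_apply, hc] using LinearMap.congr_fun hθ ![0, 0, 1, 0]
  have ha : a = 0 := by
    simpa [leeForm_apply, hc] using LinearMap.congr_fun hθ ![0, 0, 0, 1]
  simp [hα, ha] at hd

theorem dom_eq_leeForm_wedge_om (E F G : Fin 4 → ℝ) :
    dom α a β b r E F G =
      leeForm α a β b r E * om F G + leeForm α a β b r F * om G E +
        leeForm α a β b r G * om E F := by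
  simp only [leeForm_apply, dom, om, ip, Jm, bk, Pi.add_apply, Pi.smul_apply, smul_eq_mul,
    Matrix.cons_val]
  ring

theorem dom_eq_zero_iff_leeForm_eq_zero :
    (∀ E F G, dom α a β b r E F G = 0) ↔ leeForm α a β b r = 0 := by
  refine ⟨fun hdω => LinearMap.ext fun E => ?_, fun hθ E F G => ?_⟩
  · -- Contracting `θ ∧ ω` with `X` and `Y` returns `θ`, as `θ X = θ Y = 0` and `ω(X, Y) = 1`.
    simpa [dom_eq_leeForm_wedge_om, leeForm_apply, om, ip, Jm] using
      hdω E ![1, 0, 0, 0] ![0, 1, 0, 0]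
  · simp [dom_eq_leeForm_wedge_om, hθ]

theorem dom_eq_zero_iff (hd : α * b - a * β ≠ 0) :
    (∀ E F G, dom α a β b r E F G = 0) ↔ r ^ 2 = 4 * (α * b - a * β) :=
  dom_eq_zero_iff_leeForm_eq_zero.trans (leeForm_eq_zero_iff hd)

-- With `z = E 0 + i E 1` and `w = E 2 + i E 3`, the two coefficients are the real and imaginary
-- parts of `(dz ∧ dw)(E, F)`; antilinearity of `N` accounts for the minus sign.
theorem NT_eq_smul_NT_X_Z (E F : Fin 4 → ℝ) :
    NT α a β b r E F =
      (E 0 * F 2 - E 2 * F 0 - (E 1 * F 3 - E 3 * F 1)) •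
          NT α a β b r ![1, 0, 0, 0] ![0, 0, 1, 0] -
        (E 0 * F 3 - E 3 * F 0 + (E 1 * F 2 - E 2 * F 1)) •
          Jm (NT α a β b r ![1, 0, 0, 0] ![0, 0, 1, 0]) := by
  ext i
  fin_cases i <;>
  · simp only [NT, Jm, bk, Pi.add_apply, Pi.sub_apply, Pi.smul_apply, smul_eq_mul, Fin.zero_eta,
      Fin.mk_one, Fin.reduceFinMk, Matrix.cons_val]
    ring

theorem NT_X_Z :
    NT α a β b r ![1, 0, 0, 0] ![0, 0, 1, 0] =
      (r / (2 * (α * b - a * β))) •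
        ![0, 0, 2 * ((α + b) * (β - a)), (α + b) ^ 2 - (β - a) ^ 2] := by
  ext i
  fin_cases i <;>
  · simp only [NT, Jm, bk, Pi.add_apply, Pi.sub_apply, Pi.smul_apply, smul_eq_mul, Fin.zero_eta,
      Fin.mk_one, Fin.reduceFinMk, Matrix.cons_val]
    generalize α * b - a * β = D
    ring

theorem NT_eq_zero_iff_NT_X_Z_eq_zero :
    (∀ E F, NT α a β b r E F = 0) ↔ NT α a β b r ![1, 0, 0, 0] ![0, 0, 1, 0] = 0 := by
  refine ⟨fun hN => hN _ _, fun hXZ E F => ?_⟩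
  have Jm_zero : Jm 0 = 0 := by simp [Jm]
  rw [NT_eq_smul_NT_X_Z, hXZ, Jm_zero, smul_zero, smul_zero, sub_zero]

theorem NT_eq_zero_iff (hd : α * b - a * β ≠ 0) :
    (∀ E F, NT α a β b r E F = 0) ↔ r = 0 ∨ (α + b = 0 ∧ β - a = 0) := by
  rw [NT_eq_zero_iff_NT_X_Z_eq_zero, NT_X_Z, smul_eq_zero, ← mul_eq_zero_and_sq_eq_sq_iff_s14]
  simp [hd, sub_eq_zero]

end

theorem g5_never_kaehler (α a β b r : ℝ) (hd : α * b - a * β ≠ 0) (hr : r ≠ 0) :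
    ¬ ((∀ E F G : Fin 4 → ℝ, dom α a β b r E F G = 0) ∧
      (∀ E F : Fin 4 → ℝ, NT α a β b r E F = 0)) := by
  rintro ⟨hdω, hN⟩
  have hr_sq : r ^ 2 = 4 * (α * b - a * β) := (dom_eq_zero_iff hd).1 hdω
  obtain ⟨hαb, hβa⟩ : α + b = 0 ∧ β - a = 0 := ((NT_eq_zero_iff hd).1 hN).resolve_left hr
  have hdet : α * b - a * β = -(α ^ 2 + a ^ 2) := by
    rw [eq_neg_of_add_eq_zero_right hαb, sub_eq_zero.1 hβa]
    ring
  have hr_pos : 0 < r ^ 2 := by positivity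
  linarith [sq_nonneg α, sq_nonneg a]

end
end
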